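/- Let t ≥ 3 be an integer and let M be a matroid admitting a cyclic (t−1,t)-ordering e_1, e_2, …, e_n with n ≥ 4t−6. Then for every index i: every t-element circuit C of M containing X_i satisfies C ⊆ σ[i−(2t−4), i+3t−6], and every t-element cocircuit C* of M containing X_i satisfies C* ⊆ σ[i−(2t−4), i+3t−6]. -/

import Mathlib

open Set

namespace CyclicArr

variable {α : Type*}

/-- `C` is a circuit of the matroid `M`: a minimal dependent set. -/
def Cct (M : Matroid α) (C : Set α) : Prop := Minimal M.Dep C

/-- The set of `len` consecutive elements `{e_i, e_{i+1}, …, e_{i+len-1}}`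
in a cyclic ordering `e`, subscripts mod `n`. -/
def seg {n : ℕ} (e : ZMod n → α) (i : ℤ) (len : ℕ) : Set α :=
  (fun k : ℕ => e ((i + k : ℤ) : ZMod n)) '' Set.Iio len

/-- `e` is a cyclic ordering of (the ground set of) `M`. -/
def CyclicOrd {n : ℕ} (M : Matroid α) (e : ZMod n → α) : Prop :=
  Function.Injective e ∧ Set.range e = M.E

/-- `e` is a cyclic `(t-1, t)`-ordering of `M`: every `t-1` consecutive elements
are contained in a `t`-element circuit and a `t`-element cocircuit. -/
def CyclicPropOrd {n : ℕ} (M : Matroid α) (t : ℕ) (e : ZMod n → α) : Prop :=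
  CyclicOrd M e ∧
  ∀ i : ℤ, (∃ C, Cct M C ∧ C.ncard = t ∧ seg e i (t-1) ⊆ C) ∧
           (∃ C, Cct M✶ C ∧ C.ncard = t ∧ seg e i (t-1) ⊆ C)


def inW (t : ℤ) (d : ℤ → ℤ) (m p : ℤ) : Prop := (m ≤ p ∧ p ≤ m + t - 2) ∨ p = d m

theorem core (t n : ℤ) (ht : 3 ≤ t) (d c : ℤ → ℤ)
    (orth : ∀ m k p, 2 - t ≤ m → m + t - 2 ≤ n - t + 1 → 2 - t ≤ k → k + t - 2 ≤ n - t + 1 →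
      inW t d m p → inW t c k p → ∃ q, q ≠ p ∧ inW t d m q ∧ inW t c k q)
    (h1 : 3 * t - 5 ≤ d 0) (h2 : d 0 ≤ n - 2 * t + 3) : False := by
  obtain ⟨j, hj⟩ : ∃ j, j = d 0 := ⟨_, rfl⟩
  rw [← hj] at h1 h2
  have hc : ∀ k, j - t + 2 ≤ k → k ≤ j → 0 ≤ c k ∧ c k ≤ t - 2 := by
    intro k hk hk'
    obtain ⟨q, hq⟩ := orth 0 k j (by omega) (by omega) (by omega) (by omega)
      (by unfold inW; omega) (by unfold inW; omega)
    unfold inW at hq; omega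
  have hd : ∀ m k, j - t + 2 ≤ k → k ≤ j → 2 - t ≤ m → m ≤ t - 2 → m ≤ c k → c k ≤ m + t - 2 →
      k ≤ d m ∧ d m ≤ k + t - 2 := by
    intro m k hk hk' hm hm' h h'
    have := hc k hk hk'
    obtain ⟨q, hq⟩ := orth m k (c k) (by omega) (by omega) (by omega) (by omega)
      (by unfold inW; omega) (by unfold inW; omega)
    unfold inW at hq; omega
  have adj : ∀ m, -1 ≤ m → m ≤ 0 → d m = j → d (m + 1) = j → False := by
    intro m hm hm' h h'
    obtain ⟨q, hq⟩ := orth (m+1) (m+t-1) (m+t-1) (by omega) (by omega) (by omega) (by omega)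
      (by unfold inW; omega) (by unfold inW; omega)
    have hx : c (m+t-1) = q := by unfold inW at hq; omega
    obtain ⟨r, hr⟩ := orth m (m+t-1) q (by omega) (by omega) (by omega) (by omega)
      (by unfold inW at *; omega) (by unfold inW at *; omega)
    unfold inW at hq hr; omega
  obtain ⟨k, hk1, hk2, hk⟩ : ∃ k, j - t + 2 ≤ k ∧ k ≤ j ∧ c k = 0 := by
    by_contra! H
    have a1 := hc j (by omega) (by omega)
    have a2 := hc (j-t+2) (by omega) (by omega)
    have b1 := H j (by omega) (by omega)
    have b2 := H (j-t+2) (by omega) (by omega)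
    have e1 := hd 1 j (by omega) (by omega) (by omega) (by omega) (by omega) (by omega)
    have e2 := hd 1 (j-t+2) (by omega) (by omega) (by omega) (by omega) (by omega) (by omega)
    exact adj 0 (by omega) (by omega) (by omega) (by norm_num; omega)
  obtain ⟨l, hl1, hl2, hl⟩ : ∃ k, j - t + 2 ≤ k ∧ k ≤ j ∧ c k = t - 2 := by
    by_contra! H
    have a1 := hc j (by omega) (by omega)
    have a2 := hc (j-t+2) (by omega) (by omega)
    have b1 := H j (by omega) (by omega)
    have b2 := H (j-t+2) (by omega) (by omega)
    have e1 := hd (-1) j (by omega) (by omega) (by omega) (by omega) (by omega) (by omega)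
    have e2 := hd (-1) (j-t+2) (by omega) (by omega) (by omega) (by omega) (by omega) (by omega)
    exact adj (-1) (by omega) (by omega) (by omega) (by norm_num; omega)
  have e1 := hd (2 - t) k (by omega) (by omega) (by omega) (by omega) (by omega) (by omega)
  have e2 := hd (t - 2) l (by omega) (by omega) (by omega) (by omega) (by omega) (by omega)
  obtain ⟨q, hq⟩ := orth (2-t) 0 0 (by omega) (by omega) (by omega) (by omega)
      (by unfold inW; omega) (by unfold inW; omega)
  obtain ⟨r, hr⟩ := orth (t-2) 0 (t-2) (by omega) (by omega) (by omega) (by omega)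
      (by unfold inW; omega) (by unfold inW; omega)
  have e3 : d (t-2) = d (2-t) := by unfold inW at hq hr; omega
  obtain ⟨s, hs⟩ := orth (t-2) k (d (t-2)) (by omega) (by omega) (by omega) (by omega)
      (by unfold inW; omega) (by unfold inW; omega)
  unfold inW at hs; omega

theorem mem_seg {n : ℕ} (e : ZMod n → α) (i : ℤ) (len : ℕ) (p : ℤ) (h : i ≤ p)
    (h' : p < i + len) : e ((p : ℤ) : ZMod n) ∈ seg e i len := by
  refine ⟨(p - i).toNat, ?_, ?_⟩
  · simp only [Set.mem_Iio]; omega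
  · have : i + ((p - i).toNat : ℤ) = p := by omega
    simp only [this]

theorem inj_aux {n : ℕ} (e : ZMod n → α) (he : Function.Injective e) (p q : ℤ)
    (h : e ((p : ℤ) : ZMod n) = e ((q : ℤ) : ZMod n)) (h1 : p - q < n) (h2 : q - p < n) :
    p = q := by
  have := he h
  rw [ZMod.intCast_eq_intCast_iff_dvd_sub] at this
  have := Int.eq_zero_of_abs_lt_dvd this (by rw [abs_lt]; omega)
  omega

theorem cov_aux {n : ℕ} (hn : 0 < n) (e : ZMod n → α) (L : ℤ) (x : α) (hx : x ∈ Set.range e) :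
    ∃ p : ℤ, L ≤ p ∧ p < L + n ∧ e ((p : ℤ) : ZMod n) = x := by
  obtain ⟨z, rfl⟩ := hx
  obtain ⟨a, rfl⟩ := ZMod.intCast_surjective z
  refine ⟨L + (a - L) % n, ?_, ?_, ?_⟩
  · have := Int.emod_nonneg (a - L) (b := (n : ℤ)) (by omega); omega
  · have := Int.emod_lt_of_pos (a - L) (b := (n : ℤ)) (by omega); omega
  · congr 1
    rw [ZMod.intCast_eq_intCast_iff_dvd_sub]
    refine ⟨(a - L) / n, ?_⟩
    have := Int.emod_add_mul_ediv (a - L) n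
    linarith

theorem seg_ncard {n : ℕ} (e : ZMod n → α) (he : Function.Injective e) (i : ℤ) (len : ℕ)
    (h : len ≤ n) : (seg e i len).ncard = len := by
  unfold seg
  rw [Set.ncard_image_of_injOn]
  · rw [← Finset.coe_Iio, Set.ncard_coe_finset, Nat.card_Iio]
  · intro a ha b hb hab
    simp only [Set.mem_Iio] at ha hb
    have := inj_aux e he _ _ hab (by omega) (by omega)
    omega

theorem rep {n t : ℕ} (ht : 3 ≤ t) (hn : t ≤ n) (e : ZMod n → α) (he : Function.Injective e)
    (i m d L : ℤ) (C : Set α) (hC : C.ncard = t) (hs : seg e (i + m) (t - 1) ⊆ C)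
    (hm : L ≤ m) (hm' : m + t - 2 < L + n) (hd : L ≤ d) (hd' : d < L + n)
    (hdm : d < m ∨ m + t - 2 < d) (hdC : e ((i + d : ℤ) : ZMod n) ∈ C) :
    ∀ p : ℤ, L ≤ p → p < L + n →
      (e ((i + p : ℤ) : ZMod n) ∈ C ↔ ((m ≤ p ∧ p ≤ m + t - 2) ∨ p = d)) := by
  have hfin : C.Finite := Set.finite_of_ncard_ne_zero (by omega)
  have hnot : ∀ p : ℤ, L ≤ p → p < L + n → e ((i + p : ℤ) : ZMod n) ∈ seg e (i + m) (t - 1) →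
      m ≤ p ∧ p ≤ m + t - 2 := by
    rintro p h1 h2 ⟨k, hk, hk'⟩
    simp only [Set.mem_Iio] at hk
    have := inj_aux e he _ _ hk' (by omega) (by omega)
    omega
  have hdn : e ((i + d : ℤ) : ZMod n) ∉ seg e (i + m) (t - 1) := by
    intro h
    have := hnot d hd hd' h
    omega
  have hEq : insert (e ((i + d : ℤ) : ZMod n)) (seg e (i + m) (t - 1)) = C := by
    apply Set.eq_of_subset_of_ncard_le (Set.insert_subset hdC hs) _ hfin
    rw [Set.ncard_insert_of_notMem hdn (hfin.subset hs), seg_ncard e he _ _ (by omega)]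
    omega
  intro p h1 h2
  rw [← hEq]
  constructor
  · rintro (h | h)
    · right
      have := inj_aux e he _ _ h (by omega) (by omega)
      omega
    · exact Or.inl (hnot p h1 h2 h)
  · rintro (h | h)
    · exact Or.inr (mem_seg e _ _ _ (by omega) (by omega))
    · subst h; exact Or.inl rfl

theorem exists_rep {n t : ℕ} (ht : 3 ≤ t) (hn : t ≤ n) (e : ZMod n → α)
    (he : Function.Injective e)
    (i m L : ℤ) (C : Set α) (hCE : C ⊆ Set.range e) (hC : C.ncard = t)
    (hs : seg e (i + m) (t - 1) ⊆ C)
    (hm : L ≤ m) (hm' : m + t - 2 < L + n) :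
    ∃ d : ℤ, L ≤ d ∧ d < L + n ∧ ∀ p : ℤ, L ≤ p → p < L + n →
      (e ((i + p : ℤ) : ZMod n) ∈ C ↔ ((m ≤ p ∧ p ≤ m + t - 2) ∨ p = d)) := by
  have hc := seg_ncard e he (i + m) (t - 1) (by omega)
  obtain ⟨x, hx, hx'⟩ := Set.exists_mem_notMem_of_ncard_lt_ncard
    (s := seg e (i + m) (t - 1)) (t := C) (by omega)
    (Set.finite_of_ncard_ne_zero (by omega))
  obtain ⟨p, h1, h2, rfl⟩ := cov_aux (by omega) e (i + L) x (hCE hx)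
  have hp : i + (p - i) = p := by ring
  refine ⟨p - i, by omega, by omega, rep ht hn e he i m (p - i) L C hC hs hm hm' (by omega)
    (by omega) ?_ (by rwa [hp])⟩
  by_contra hcon
  exact hx' (mem_seg e _ _ _ (by omega) (by omega))

theorem half (t n : ℕ) (ht : 3 ≤ t) (hn : 4 * t - 6 ≤ n) (e : ZMod n → α)
    (he : Function.Injective e) (F G : Set α → Prop)
    (hF : ∀ C, F C → C ⊆ Set.range e) (hG : ∀ C, G C → C ⊆ Set.range e)
    (hFG : ∀ C K, F C → G K → (C ∩ K).Nonempty → (C ∩ K).Nontrivial)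
    (hF' : ∀ i : ℤ, ∃ C, F C ∧ C.ncard = t ∧ seg e i (t-1) ⊆ C)
    (hG' : ∀ i : ℤ, ∃ C, G C ∧ C.ncard = t ∧ seg e i (t-1) ⊆ C) (i : ℤ)
    (C : Set α) (hC : F C) (hCt : C.ncard = t) (hs : seg e i (t - 1) ⊆ C) :
    C ⊆ seg e (i - (2 * (t : ℤ) - 4)) (5 * t - 9) := by
  intro x hx
  by_contra hxs
  obtain ⟨j', h1, h2, rfl⟩ := cov_aux (by omega) e (i + (2 - t)) x (hF C hC hx)
  obtain ⟨j, rfl⟩ : ∃ j, j' = i + j := ⟨j' - i, by ring⟩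
  have hj1 : 3 * (t : ℤ) - 5 ≤ j := by
    by_contra hcon
    exact hxs (mem_seg e _ _ _ (by omega) (by omega))
  have hj2 : j ≤ n - 2 * t + 3 := by
    by_contra hcon
    apply hxs
    have h := mem_seg e (i - (2 * (t : ℤ) - 4)) (5 * t - 9) (i + j - n) (by omega) (by omega)
    simpa using h
  have hd : ∀ m : ℤ, ∃ d : ℤ, (m = 0 → d = j) ∧ (2 - (t : ℤ) ≤ m → m + t - 2 ≤ n - t + 1 →
      ∃ D, F D ∧ 2 - (t : ℤ) ≤ d ∧ d < 2 - t + n ∧ ∀ p : ℤ, 2 - (t : ℤ) ≤ p → p < 2 - t + n →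
      (e ((i + p : ℤ) : ZMod n) ∈ D ↔ ((m ≤ p ∧ p ≤ m + t - 2) ∨ p = d))) := by
    intro m
    by_cases hm0 : m = 0
    · subst hm0
      refine ⟨j, fun _ => rfl, fun h3 h4 => ⟨C, hC, by omega, by omega, ?_⟩⟩
      exact rep ht (by omega) e he i 0 j (2 - t) C hCt (by simpa using hs) (by omega) (by omega)
        (by omega) (by omega) (by omega) hx
    · by_cases hm : 2 - (t : ℤ) ≤ m ∧ m + t - 2 ≤ n - t + 1
      · obtain ⟨D, hD, hDt, hDs⟩ := hF' (i + m)
        obtain ⟨d, h5, h6, h7⟩ := exists_rep ht (by omega) e he i m (2 - t) D (hF D hD) hDt hDs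
          (by omega) (by omega)
        exact ⟨d, fun h => absurd h hm0, fun _ _ => ⟨D, hD, h5, h6, h7⟩⟩
      · exact ⟨0, fun h => absurd h hm0, fun h h' => absurd ⟨h, h'⟩ hm⟩
  have hc : ∀ m : ℤ, ∃ d : ℤ, (2 - (t : ℤ) ≤ m → m + t - 2 ≤ n - t + 1 →
      ∃ D, G D ∧ 2 - (t : ℤ) ≤ d ∧ d < 2 - t + n ∧ ∀ p : ℤ, 2 - (t : ℤ) ≤ p → p < 2 - t + n →
      (e ((i + p : ℤ) : ZMod n) ∈ D ↔ ((m ≤ p ∧ p ≤ m + t - 2) ∨ p = d))) := by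
    intro m
    by_cases hm : 2 - (t : ℤ) ≤ m ∧ m + t - 2 ≤ n - t + 1
    · obtain ⟨D, hD, hDt, hDs⟩ := hG' (i + m)
      obtain ⟨d, h5, h6, h7⟩ := exists_rep ht (by omega) e he i m (2 - t) D (hG D hD) hDt hDs
        (by omega) (by omega)
      exact ⟨d, fun _ _ => ⟨D, hD, h5, h6, h7⟩⟩
    · exact ⟨0, fun h h' => absurd ⟨h, h'⟩ hm⟩
  choose d hd0 hd using hd
  choose c hc using hc
  have hdj := hd0 0 rfl
  refine core t n (by omega) d c ?_ (by omega) (by omega)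
  intro m k p hm hm' hk hk' hp hp'
  obtain ⟨D, hD, hD1, hD2, hD3⟩ := hd m hm hm'
  obtain ⟨K, hK, hK1, hK2, hK3⟩ := hc k hk hk'
  unfold inW at *
  have hp1 : 2 - (t : ℤ) ≤ p := by omega
  have hp2 : p < 2 - (t : ℤ) + n := by omega
  obtain ⟨y, hy, hyp⟩ := (hFG D K hD hK ⟨_, (hD3 p hp1 hp2).2 hp, (hK3 p hp1 hp2).2 hp'⟩).exists_ne
    (e ((i + p : ℤ) : ZMod n))
  obtain ⟨q', h3, h4, rfl⟩ := cov_aux (by omega) e (i + (2 - t)) y (hF D hD hy.1)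
  obtain ⟨q, rfl⟩ : ∃ q, q' = i + q := ⟨q' - i, by ring⟩
  refine ⟨q, ?_, (hD3 q (by omega) (by omega)).1 hy.1, (hK3 q (by omega) (by omega)).1 hy.2⟩
  rintro rfl
  exact hyp rfl

/-- With `t ≥ 3` and `n ≥ 4t-6`, every `t`-element circuit or cocircuit
containing `X_i` is contained in `σ[i-(2t-4), i+3t-6]` (a window of `5t-9` consecutive
elements starting at position `i-(2t-4)`). -/
theorem statement_4 (M : Matroid α) (t n : ℕ) (ht : 3 ≤ t) (hn : 4 * t - 6 ≤ n)
    (e : ZMod n → α) (he : CyclicPropOrd M t e) :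
    ∀ i : ℤ,
      (∀ C : Set α, Cct M C → C.ncard = t → seg e i (t - 1) ⊆ C →
        C ⊆ seg e (i - (2 * (t : ℤ) - 4)) (5 * t - 9)) ∧
      (∀ C : Set α, Cct M✶ C → C.ncard = t → seg e i (t - 1) ⊆ C →
        C ⊆ seg e (i - (2 * (t : ℤ) - 4)) (5 * t - 9)) := by
  obtain ⟨⟨hinj, hE⟩, hX⟩ := he
  have hF : ∀ C, Cct M C → C ⊆ Set.range e := fun C hC => hE ▸ hC.prop.subset_ground
  have hG : ∀ C, Cct M✶ C → C ⊆ Set.range e := fun C hC => hE ▸ hC.prop.subset_ground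
  have hFG : ∀ C K, Cct M C → Cct M✶ K → (C ∩ K).Nonempty → (C ∩ K).Nontrivial :=
    fun C K hC hK h => Matroid.IsCircuit.isCocircuit_inter_nontrivial (M := M) hC hK h
  intro i
  refine ⟨half t n ht hn e hinj _ _ hF hG hFG (fun i => (hX i).1) (fun i => (hX i).2) i,
    half t n ht hn e hinj _ _ hG hF ?_ (fun i => (hX i).2) (fun i => (hX i).1) i⟩
  intro C K hC hK h
  rw [Set.inter_comm] at h ⊢
  exact hFG K C hK hC h

end CyclicArr
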